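/- arXiv:math/0512420 — 2 statements merged into one kernel-verified Lean document; each statement's English description precedes it below -/
import Mathlib

section
/- Let G be a graph and v, w distinct vertices with N(v) ⊆ N(w). Then the independence complex Ind(G) collapses onto Ind(G \ {w}); in particular the two complexes are homotopy equivalent. -/
open SimpleGraph

/-- A claw in `G` on center `u` and leaves `v₁, v₂, v₃`. -/
def SimpleGraph.IsClaw {V : Type*} (G : SimpleGraph V) (u v₁ v₂ v₃ : V) : Prop :=
  v₁ ≠ v₂ ∧ v₁ ≠ v₃ ∧ v₂ ≠ v₃ ∧
  G.Adj u v₁ ∧ G.Adj u v₂ ∧ G.Adj u v₃ ∧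
  ¬G.Adj v₁ v₂ ∧ ¬G.Adj v₁ v₃ ∧ ¬G.Adj v₂ v₃

/-- A graph is claw-free if it has no induced claw. -/
def SimpleGraph.ClawFree {V : Type*} (G : SimpleGraph V) : Prop :=
  ∀ u v₁ v₂ v₃ : V, ¬ G.IsClaw u v₁ v₂ v₃

/-- The closed neighborhood `Ṅ(v) = N(v) ∪ {v}`. -/
def SimpleGraph.closedNbhd {V : Type*} (G : SimpleGraph V) (v : V) : Set V :=
  insert v (G.neighborSet v)

/-- The set of faces of the independence complex `Ind(G)`. -/
def indepFaces {V : Type*} (G : SimpleGraph V) : Set (Finset V) :=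
  {s | ∀ a ∈ s, ∀ b ∈ s, ¬ G.Adj a b}

/-- The geometric realization of an abstract simplicial complex with vertex set `V`. -/
def realization {V : Type*} (K : Set (Finset V)) : Type _ :=
  {f : V → ℝ // (∀ v, 0 ≤ f v) ∧ (∑ᶠ v, f v) = 1 ∧ ∃ s ∈ K, {v | f v ≠ 0} = ↑s}

instance {V : Type*} (K : Set (Finset V)) : TopologicalSpace (realization K) :=
  instTopologicalSpaceSubtype

/-- A space is `n`-connected (`n : ℤ`) if it is nonempty when `n ≥ -1` and every continuous
map from the `i`-sphere extends to the `(i+1)`-ball for all `0 ≤ i ≤ n`. -/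
def IsNConnected (n : ℤ) (X : Type*) [TopologicalSpace X] : Prop :=
  (-1 ≤ n → Nonempty X) ∧
  ∀ i : ℕ, (i : ℤ) ≤ n →
    ∀ f : C(Metric.sphere (0 : EuclideanSpace ℝ (Fin (i + 1))) 1, X),
      ∃ g : C(Metric.closedBall (0 : EuclideanSpace ℝ (Fin (i + 1))) 1, X),
        ∀ x : Metric.sphere (0 : EuclideanSpace ℝ (Fin (i + 1))) 1,
          g ⟨x.1, Metric.sphere_subset_closedBall x.2⟩ = f x

/-- Relation generating the unreduced suspension: glue `X × {0}` to a south pole and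
`X × {1}` to a north pole. -/
def SuspRel (X : Type*) : X × unitInterval ⊕ Bool → X × unitInterval ⊕ Bool → Prop :=
  fun a b => (∃ x, a = Sum.inl (x, 0) ∧ b = Sum.inr false) ∨
    (∃ x, a = Sum.inl (x, 1) ∧ b = Sum.inr true)

/-- The unreduced suspension of a space. -/
def Susp (X : Type*) [TopologicalSpace X] : Type _ := Quot (SuspRel X)

instance (X : Type*) [TopologicalSpace X] : TopologicalSpace (Susp X) :=
  instTopologicalSpaceQuot

/-- The north pole of a suspension. -/
def Susp.north (X : Type*) [TopologicalSpace X] : Susp X := Quot.mk _ (Sum.inr true)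

/-- Relation generating the wedge sum of a family of pointed spaces. -/
def WedgeRel {ι : Type*} (X : ι → Type*) (pt : ∀ i, X i) :
    (Σ i, X i) ⊕ Unit → (Σ i, X i) ⊕ Unit → Prop :=
  fun a b => ∃ i, a = Sum.inl ⟨i, pt i⟩ ∧ b = Sum.inr ()

/-- The wedge sum of a family of pointed spaces. -/
def Wedge {ι : Type*} (X : ι → Type*) [∀ i, TopologicalSpace (X i)] (pt : ∀ i, X i) :
    Type _ :=
  Quot (WedgeRel X pt)

instance {ι : Type*} (X : ι → Type*) [∀ i, TopologicalSpace (X i)] (pt : ∀ i, X i) :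
    TopologicalSpace (Wedge X pt) :=
  instTopologicalSpaceQuot

/-- The graph `L^k_n`: vertices `{1, …, n}`, with `i < j` adjacent iff `j - i < k`. -/
def lineGraphL (n k : ℕ) : SimpleGraph (Fin n) :=
  SimpleGraph.fromRel (fun i j => (i : ℕ) < j ∧ (j : ℕ) - i < k)

/-- The graph `C^k_n`: vertices `{1, …, n}`, with `i < j` adjacent iff `j - i < k` or
`(n + i) - j < k`. -/
def circGraphC (n k : ℕ) : SimpleGraph (Fin n) :=
  SimpleGraph.fromRel (fun i j => (i : ℕ) < j ∧ ((j : ℕ) - i < k ∨ (n + i) - j < k))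

/-- One elementary collapse step: remove a free face `σ` together with the unique face
`τ` properly containing it (with `τ` of one dimension higher). -/
def ElemCollapse {V : Type*} (K L : Set (Finset V)) : Prop :=
  ∃ σ τ : Finset V, σ ∈ K ∧ τ ∈ K ∧ σ ⊂ τ ∧ τ.card = σ.card + 1 ∧
    (∀ ρ ∈ K, σ ⊂ ρ → ρ = τ) ∧ L = K \ {σ, τ}

/-- `K` collapses onto `L` if there is a finite sequence of elementary collapses from
`K` to `L`. -/
def Collapses {V : Type*} (K L : Set (Finset V)) : Prop :=
  Relation.ReflTransGen ElemCollapse K L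

/-!
If `N(v) ⊆ N(w)`, then adding `v` to an independent set containing `w` keeps it independent, so the
faces containing `w` come in pairs `{σ, insert v σ}` with `v ∉ σ`. Starting from a maximal such `σ`,
which is then a free face of `insert v σ`, these pairs can be collapsed one after the other. For the
homotopy equivalence, the vertex map sending `w` to `v` and fixing the other vertices is simplicial,
and for every face `s` the union of `s` with its image is still a face. Hence the straight-line
homotopy from the identity to the induced retraction stays inside the realization.
-/

section Collapse

variable {V : Type*} [DecidableEq V] {K : Set (Finset V)} {v w : V} {σ : Finset V}

/-- The vertex `v` dominates `w` in the complex `K`: the link of `w` is a cone with apex `v`. The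
equivalence, rather than the implication from right to left, is required because `K` is not assumed
to be closed under passing to subsets. -/
def Dominates (K : Set (Finset V)) (v w : V) : Prop :=
  ∀ ⦃σ : Finset V⦄, w ∈ σ → (insert v σ ∈ K ↔ σ ∈ K)

theorem Dominates.erase_mem (hK : Dominates K v w) (hvw : v ≠ w) (hσ : σ ∈ K) (hw : w ∈ σ) :
    σ.erase v ∈ K := by
  by_cases hv : v ∈ σ
  · rw [← hK (Finset.mem_erase.2 ⟨hvw.symm, hw⟩), Finset.insert_erase hv]
    exact hσ
  · rwa [Finset.erase_eq_of_notMem hv]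

theorem Dominates.elemCollapse_of_maximal (hK : Dominates K v w) (hvw : v ≠ w)
    (hσ : Maximal (fun s => s ∈ K ∧ w ∈ s ∧ v ∉ s) σ) :
    ElemCollapse K (K \ {σ, insert v σ}) := by
  obtain ⟨hσK, hwσ, hvσ⟩ := hσ.prop
  refine ⟨σ, insert v σ, hσK, (hK hwσ).2 hσK, Finset.ssubset_insert hvσ,
    Finset.card_insert_of_notMem hvσ, fun ρ hρ hσρ => ?_, rfl⟩
  have hwρ : w ∈ ρ := hσρ.subset hwσ
  have erase_eq : σ = ρ.erase v :=
    hσ.eq_of_le ⟨hK.erase_mem hvw hρ hwρ, Finset.mem_erase.2 ⟨hvw.symm, hwρ⟩,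
      Finset.notMem_erase v ρ⟩ (Finset.subset_erase.2 ⟨hσρ.subset, hvσ⟩)
  have hvρ : v ∈ ρ := by
    by_contra hvρ
    rw [Finset.erase_eq_of_notMem hvρ] at erase_eq
    exact hσρ.ne erase_eq
  rw [erase_eq, Finset.insert_erase hvρ]

theorem Dominates.sdiff_pair (hK : Dominates K v w) (hv : v ∉ σ) :
    Dominates (K \ {σ, insert v σ}) v w := by
  intro ρ hwρ
  have pair_iff : insert v ρ ∈ ({σ, insert v σ} : Set (Finset V)) ↔
      ρ ∈ ({σ, insert v σ} : Set (Finset V)) := by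
    by_cases hvρ : v ∈ ρ
    · rw [Finset.insert_eq_of_mem hvρ]
    · have insert_ne : insert v ρ ≠ σ := fun heq => hv (heq ▸ Finset.mem_insert_self v ρ)
      have ne_insert : ρ ≠ insert v σ := fun heq => hvρ (heq ▸ Finset.mem_insert_self v σ)
      have insert_inj : insert v ρ = insert v σ ↔ ρ = σ :=
        ⟨fun heq => by rw [← Finset.erase_insert hvρ, heq, Finset.erase_insert hv],
          congrArg (insert v)⟩
      simp only [Set.mem_insert_iff, Set.mem_singleton_iff, insert_ne, ne_insert, insert_inj,
        false_or, or_false]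
  rw [Set.mem_sdiff, Set.mem_sdiff, hK hwρ, pair_iff]

theorem Dominates.collapses (hK : Dominates K v w) (hvw : v ≠ w)
    (hfin : {s ∈ K | w ∈ s}.Finite) : Collapses K {s ∈ K | w ∉ s} := by
  induction hn : {s ∈ K | w ∈ s}.ncard using Nat.strong_induction_on generalizing K with
  | _ n ih =>
  obtain hempty | ⟨s, hs, hws⟩ := {s ∈ K | w ∈ s}.eq_empty_or_nonempty
  · have sep_eq : {s ∈ K | w ∉ s} = K :=
      Set.sep_eq_self_iff_mem_true.2 (Set.sep_eq_empty_iff_mem_false.1 hempty)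
    rw [sep_eq]
    exact .refl
  · obtain ⟨σ, hσ⟩ : ∃ σ, Maximal (fun s => s ∈ K ∧ w ∈ s ∧ v ∉ s) σ :=
      (hfin.subset fun t ht => ⟨ht.1, ht.2.1⟩).exists_maximal
        ⟨s.erase v, hK.erase_mem hvw hs hws, Finset.mem_erase.2 ⟨hvw.symm, hws⟩,
          Finset.notMem_erase v s⟩
    obtain ⟨hσK, hwσ, hvσ⟩ := hσ.prop
    have star_ssubset : {s ∈ K \ {σ, insert v σ} | w ∈ s} ⊂ {s ∈ K | w ∈ s} :=
      ⟨fun t ht => ⟨ht.1.1, ht.2⟩, fun hsub => (hsub ⟨hσK, hwσ⟩).1.2 (.inl rfl)⟩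
    have hrest := ih _ (hn ▸ Set.ncard_lt_ncard star_ssubset hfin) (hK.sdiff_pair hvσ)
      (hfin.subset star_ssubset.subset) rfl
    have sep_eq : {s ∈ K \ {σ, insert v σ} | w ∉ s} = {s ∈ K | w ∉ s} := by
      refine Set.ext fun t => ⟨fun ht => ⟨ht.1.1, ht.2⟩, fun ht => ⟨⟨ht.1, ?_⟩, ht.2⟩⟩
      rintro (rfl | rfl)
      exacts [ht.2 hwσ, ht.2 (Finset.mem_insert_of_mem hwσ)]
    rw [sep_eq] at hrest
    exact .head (hK.elemCollapse_of_maximal hvw hσ) hrest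

theorem Dominates.union_image_update_mem (hK : Dominates K v w) (hσ : σ ∈ K) :
    σ ∪ σ.image (Function.update id w v) ∈ K := by
  by_cases hw : w ∈ σ
  · have union_eq : σ ∪ σ.image (Function.update id w v) = insert v σ := by
      grind [Function.update_apply]
    rw [union_eq]
    exact (hK hw).2 hσ
  · have union_eq : σ ∪ σ.image (Function.update id w v) = σ := by
      grind [Function.update_apply]
    rwa [union_eq]

end Collapse

namespace realization

variable {V W X : Type*} [TopologicalSpace X] {K : Set (Finset V)} {L : Set (Finset W)}

theorem finite_support (f : realization K) : f.1.support.Finite := by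
  obtain ⟨s, -, hs⟩ : ∃ s ∈ K, f.1.support = ↑s := f.2.2.2
  exact hs ▸ s.finite_toSet

/-- The carrier of a point of the realization: the unique face containing it in its interior. -/
noncomputable def carrier (f : realization K) : Finset V :=
  f.finite_support.toFinset

theorem mem_carrier {f : realization K} {a : V} : a ∈ f.carrier ↔ f.1 a ≠ 0 := by
  simp [carrier]

theorem carrier_mem (f : realization K) : f.carrier ∈ K := by
  obtain ⟨s, hsK, hs⟩ := f.2.2.2
  have carrier_eq : f.carrier = s := by
    rw [← Finset.coe_inj, ← hs]
    exact Set.ext fun a => mem_carrier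
  rwa [carrier_eq]

theorem sum_carrier (f : realization K) : ∑ a ∈ f.carrier, f.1 a = 1 :=
  (finsum_eq_sum _ f.finite_support).symm.trans f.2.2.1

theorem continuous_eval (a : V) : Continuous fun f : realization K => f.1 a :=
  (continuous_apply a).comp continuous_subtype_val

theorem lowerSemicontinuous_sum_carrier_filter (p : V → Prop) [DecidablePred p] :
    LowerSemicontinuous fun f : realization K => ∑ a ∈ f.carrier with p a, f.1 a := by
  intro f c hc
  have hcont : Continuous fun g : realization K => ∑ a ∈ f.carrier with p a, g.1 a :=
    continuous_finsetSum _ fun a _ => continuous_eval a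
  filter_upwards [hcont.continuousAt.eventually_const_lt hc] with g hg
  rw [← Finset.sum_filter_ne_zero] at hg
  refine hg.trans_le (Finset.sum_le_sum_of_subset_of_nonneg (fun a ha => ?_) fun a _ _ => g.2.1 a)
  simp only [Finset.mem_filter] at ha ⊢
  exact ⟨mem_carrier.2 ha.2, ha.1.2⟩

-- Since the total weight is `1`, lower semicontinuity for `¬ p` gives upper semicontinuity for `p`.
theorem continuous_sum_carrier_filter (p : V → Prop) [DecidablePred p] :
    Continuous fun f : realization K => ∑ a ∈ f.carrier with p a, f.1 a := by
  refine continuous_iff_lower_upperSemicontinuous.2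
    ⟨lowerSemicontinuous_sum_carrier_filter p, fun f c hc => ?_⟩
  have sum_add (g : realization K) :
      ∑ a ∈ g.carrier with p a, g.1 a + ∑ a ∈ g.carrier with ¬ p a, g.1 a = 1 :=
    (Finset.sum_filter_add_sum_filter_not _ _ _).trans g.sum_carrier
  have hc' : 1 - c < ∑ a ∈ f.carrier with ¬ p a, f.1 a := by linarith [sum_add f]
  filter_upwards [lowerSemicontinuous_sum_carrier_filter (fun a => ¬ p a) f _ hc'] with g hg
  linarith [sum_add g]

section Map

variable [DecidableEq W] {φ : V → W}

theorem sum_fiber_ne_zero_iff (f : realization K) (b : W) :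
    ∑ a ∈ f.carrier with φ a = b, f.1 a ≠ 0 ↔ b ∈ f.carrier.image φ := by
  rw [Ne, Finset.sum_eq_zero_iff_of_nonneg fun a _ => f.2.1 a]
  simp [mem_carrier, and_comm]

/-- The map of realizations induced by a simplicial map `φ`: the weight of a vertex of the target
is the total weight of its fiber. -/
noncomputable def map (φ : V → W) (hφ : Set.MapsTo (Finset.image φ) K L) :
    C(realization K, realization L) where
  toFun f := ⟨fun b => ∑ a ∈ f.carrier with φ a = b, f.1 a,
    fun b => Finset.sum_nonneg fun a _ => f.2.1 a,
    by
      rw [finsum_eq_sum_of_support_subset (s := f.carrier.image φ) _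
          fun b hb => (f.sum_fiber_ne_zero_iff b).1 hb,
        Finset.sum_fiberwise_of_maps_to fun a ha => Finset.mem_image_of_mem φ ha, f.sum_carrier],
    f.carrier.image φ, hφ f.carrier_mem, Set.ext f.sum_fiber_ne_zero_iff⟩
  continuous_toFun := Continuous.subtype_mk
    (continuous_pi fun b => continuous_sum_carrier_filter fun a => φ a = b) _

theorem carrier_map (hφ : Set.MapsTo (Finset.image φ) K L) (f : realization K) :
    (map φ hφ f).carrier = f.carrier.image φ :=
  Finset.ext fun b => mem_carrier.trans (f.sum_fiber_ne_zero_iff b)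

end Map

section Homotopy

variable [DecidableEq V]

theorem exists_mem_support_convexCombination_eq {f g : realization K}
    (h : f.carrier ∪ g.carrier ∈ K) (t : unitInterval) :
    ∃ s ∈ K, {a | (1 - (t : ℝ)) * f.1 a + t * g.1 a ≠ 0} = ↑s := by
  have ne_zero_iff (a : V) : (1 - (t : ℝ)) * f.1 a + t * g.1 a ≠ 0 ↔
      (t ≠ 1 ∧ a ∈ f.carrier) ∨ (t ≠ 0 ∧ a ∈ g.carrier) := by
    rw [Ne, add_eq_zero_iff_of_nonneg (mul_nonneg (unitInterval.one_minus_nonneg t) (f.2.1 a))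
      (mul_nonneg (unitInterval.nonneg t) (g.2.1 a)), mul_eq_zero, mul_eq_zero, sub_eq_zero,
      eq_comm (a := 1), Set.Icc.coe_eq_one, Set.Icc.coe_eq_zero, mem_carrier, mem_carrier]
    tauto
  simp only [ne_zero_iff]
  by_cases ht₀ : t = 0
  · exact ⟨f.carrier, f.carrier_mem, by ext; simp [ht₀]⟩
  by_cases ht₁ : t = 1
  · exact ⟨g.carrier, g.carrier_mem, by ext; simp [ht₁]⟩
  · exact ⟨f.carrier ∪ g.carrier, h, by ext; simp [ht₀, ht₁]⟩

/-- The point dividing the segment from `f` to `g` in the ratio `t : 1 - t`. -/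
def convexCombination (f g : realization K) (h : f.carrier ∪ g.carrier ∈ K)
    (t : unitInterval) : realization K :=
  ⟨fun a => (1 - (t : ℝ)) * f.1 a + t * g.1 a,
    fun a => add_nonneg (mul_nonneg (unitInterval.one_minus_nonneg t) (f.2.1 a))
      (mul_nonneg (unitInterval.nonneg t) (g.2.1 a)),
    by
      rw [finsum_add_distrib (f.finite_support.subset (Function.support_mul_subset_right _ _))
        (g.finite_support.subset (Function.support_mul_subset_right _ _)),
        ← mul_finsum, ← mul_finsum, f.2.2.1, g.2.2.1]
      ring,
    exists_mem_support_convexCombination_eq h t⟩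

theorem homotopic_of_carrier_union_mem {α β : C(X, realization K)}
    (h : ∀ x, (α x).carrier ∪ (β x).carrier ∈ K) : α.Homotopic β := by
  refine ⟨⟨⟨fun p => convexCombination (α p.2) (β p.2) (h p.2) p.1, ?_⟩, fun x => ?_, fun x => ?_⟩⟩
  · refine Continuous.subtype_mk (continuous_pi fun a => ?_) _
    have hα : Continuous fun x => (α x).1 a := (continuous_eval a).comp α.continuous
    have hβ : Continuous fun x => (β x).1 a := (continuous_eval a).comp β.continuous
    fun_prop
  · exact Subtype.ext (funext fun a => by simp [convexCombination])
  · exact Subtype.ext (funext fun a => by simp [convexCombination])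

/-- Simplicial maps that are mutually inverse up to contiguity induce a homotopy equivalence of
realizations. -/
noncomputable def homotopyEquivOfContiguous [DecidableEq W] (φ : V → W) (ψ : W → V)
    (hφ : Set.MapsTo (Finset.image φ) K L) (hψ : Set.MapsTo (Finset.image ψ) L K)
    (hψφ : ∀ s ∈ K, (s.image φ).image ψ ∪ s ∈ K) (hφψ : ∀ t ∈ L, (t.image ψ).image φ ∪ t ∈ L) :
    ContinuousMap.HomotopyEquiv (realization K) (realization L) where
  toFun := map φ hφ
  invFun := map ψ hψ
  left_inv := homotopic_of_carrier_union_mem fun f => by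
    simpa only [ContinuousMap.comp_apply, ContinuousMap.id_apply, carrier_map]
      using hψφ _ f.carrier_mem
  right_inv := homotopic_of_carrier_union_mem fun g => by
    simpa only [ContinuousMap.comp_apply, ContinuousMap.id_apply, carrier_map]
      using hφψ _ g.carrier_mem

end Homotopy

end realization

section Deletion

variable {V : Type*} [DecidableEq V] {K : Set (Finset V)} {v w : V}

/-- Deleting a dominated vertex does not change the homotopy type of a simplicial complex. -/
noncomputable def Dominates.homotopyEquivDeletion (hK : Dominates K v w) (hvw : v ≠ w)
    (hlower : IsLowerSet K) :
    ContinuousMap.HomotopyEquiv (realization K)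
      (realization (Finset.image ((↑) : ({w}ᶜ : Set V) → V) ⁻¹' K)) :=
  have update_ne (x : V) : Function.update id w v x ∈ ({w}ᶜ : Set V) := by
    grind [Function.update_apply]
  have val_comp : Subtype.val ∘ Set.codRestrict _ _ update_ne = Function.update id w v := rfl
  have comp_val : Set.codRestrict _ _ update_ne ∘ Subtype.val = id :=
    funext fun x => Subtype.ext (Function.update_of_ne x.2 v id :)
  realization.homotopyEquivOfContiguous (Set.codRestrict _ _ update_ne) Subtype.val
    (fun s hs => by
      rw [Set.mem_preimage, Finset.image_image, val_comp]
      exact hlower Finset.subset_union_right (hK.union_image_update_mem hs))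
    (Set.mapsTo_preimage _ _)
    (fun s hs => by
      rw [Finset.image_image, val_comp, Finset.union_comm]
      exact hK.union_image_update_mem hs)
    (fun t ht => by rwa [Finset.image_image, comp_val, Finset.image_id, Finset.union_self])

end Deletion

section IndependenceComplex

variable {V : Type*} {G : SimpleGraph V} {v w : V}

theorem isLowerSet_indepFaces (G : SimpleGraph V) : IsLowerSet (indepFaces G) :=
  fun _ _ hts hs a ha b hb => hs a (hts ha) b (hts hb)

theorem indepFaces_induce [DecidableEq V] (G : SimpleGraph V) (U : Set V) :
    indepFaces (G.induce U) = Finset.image ((↑) : U → V) ⁻¹' indepFaces G := by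
  ext t
  simp only [indepFaces, Set.mem_preimage, Set.mem_ofPred_eq, Finset.forall_mem_image,
    SimpleGraph.induce_adj]

theorem dominates_indepFaces [DecidableEq V] (h : G.neighborSet v ⊆ G.neighborSet w) :
    Dominates (indepFaces G) v w := by
  intro σ hw
  refine ⟨fun hσ => isLowerSet_indepFaces G (Finset.subset_insert v σ) hσ, fun hσ => ?_⟩
  have not_adj (x : V) (hx : x ∈ σ) : ¬ G.Adj v x := fun hvx => hσ w hw x hx (h hvx)
  intro a ha b hb
  obtain rfl | haσ := Finset.mem_insert.1 ha <;> obtain rfl | hbσ := Finset.mem_insert.1 hb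
  · exact G.irrefl
  · exact not_adj b hbσ
  · exact fun hab => not_adj a haσ hab.symm
  · exact hσ a haσ b hbσ

theorem finite_indepFaces_mem (hw : (G.neighborSet w)ᶜ.Finite) :
    {s ∈ indepFaces G | w ∈ s}.Finite := by
  refine hw.toFinset.powerset.finite_toSet.subset fun s ⟨hs, hws⟩ => ?_
  exact Finset.mem_powerset.2 fun x hx => hw.mem_toFinset.2 (hs w hws x hx)

end IndependenceComplex

-- For infinite `V` the topology of `realization` is that of coordinatewise convergence, not the
-- weak topology of a CW complex.
theorem indComplex_collapses_of_nbhd_subset_general {V : Type*}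
    (G : SimpleGraph V) (v w : V) (hvw : v ≠ w)
    (h : G.neighborSet v ⊆ G.neighborSet w) :
    ((G.neighborSet w)ᶜ.Finite → Collapses (indepFaces G) {s ∈ indepFaces G | w ∉ s}) ∧
    Nonempty (ContinuousMap.HomotopyEquiv (realization (indepFaces G))
      (realization (indepFaces (G.induce ({w} : Set V)ᶜ)))) := by
  classical
  have hdom : Dominates (indepFaces G) v w := dominates_indepFaces h
  refine ⟨fun hw => hdom.collapses hvw (finite_indepFaces_mem hw), ?_⟩
  rw [indepFaces_induce]
  exact ⟨hdom.homotopyEquivDeletion hvw (isLowerSet_indepFaces G)⟩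

/-- If `v ≠ w` and `N(v) ⊆ N(w)`, then `Ind(G)` collapses onto
`Ind(G \ {w})`; in particular the two complexes are homotopy equivalent. -/
theorem indComplex_collapses_of_nbhd_subset {V : Type*} [Fintype V]
    (G : SimpleGraph V) (v w : V) (hvw : v ≠ w)
    (h : G.neighborSet v ⊆ G.neighborSet w) :
    Collapses (indepFaces G) {s ∈ indepFaces G | w ∉ s} ∧
    Nonempty (ContinuousMap.HomotopyEquiv (realization (indepFaces G))
      (realization (indepFaces (G.induce ({w} : Set V)ᶜ)))) := by
  obtain ⟨hcollapse, hequiv⟩ := indComplex_collapses_of_nbhd_subset_general G v w hvw h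
  exact ⟨hcollapse (Set.toFinite _), hequiv⟩
end

section
/- Let u be a vertex of a graph G such that the induced subgraph G[N(u)] is a complete graph. Then the independence complex Ind(G) is homotopy equivalent to the wedge, over all v ∈ N(u), of the suspensions susp(Ind(G \ Ṅ(v))). -/
open SimpleGraph

/-!
The faces of `Ind(G)` missing `N(u)` form a cone with apex `u`, and every other face contains
exactly one vertex of the clique `N(u)`, hence lies in the open star of exactly one of them.
Collapsing the contractible cone to a point therefore leaves one summand for every `v ∈ N(u)`: the
closed star of `v`, a cone over the link of `v`, with that link collapsed, which is the suspension
of the link. The faces of the link of `v` are the independent sets avoiding `Ṅ(v)`.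

That the collapse is a homotopy equivalence is shown by a deformation of the whole complex that
preserves the cone and contracts it to `u`. Writing `m` for the total barycentric weight on `N(u)`,
at time `s` it stretches the range `[s / (1 + s), 1]` of `m` to `[0, 1]` and pulls the points with
smaller `m` towards `u`. The collapsed complex is realized in `ℝ^V` by the map `f ↦ m • f`, so that
compactness makes it homeomorphic to the wedge of suspensions.
-/

open Topology unitInterval

section QuotientMap

variable {X Y E : Type*} [TopologicalSpace X] [TopologicalSpace Y] [TopologicalSpace E]

theorem nonempty_homotopyEquiv_of_isQuotientMap {q : C(X, Y)} (hq : IsQuotientMap q)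
    {g : C(X, X)} (H : (ContinuousMap.id X).Homotopy g) (hg : Function.FactorsThrough g q)
    (hH : ∀ s, Function.FactorsThrough (fun x => q (H (s, x))) q) :
    Nonempty (ContinuousMap.HomotopyEquiv X Y) := by
  let r : C(Y, X) := hq.lift g hg
  have hr : r.comp q = g := hq.lift_comp g hg
  let K : I × Y → Y := fun p => q (H (p.1, Function.surjInv hq.surjective p.2))
  have hK : ∀ s x, K (s, q x) = q (H (s, x)) := fun s x =>
    hH s (Function.surjInv_eq hq.surjective (q x))
  have hK_cont : Continuous K := hq.continuous_lift_prod_right <|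
    (q.continuous.comp H.continuous).congr fun p => (hK p.1 p.2).symm
  have K_homotopy : (ContinuousMap.id Y).Homotopic (q.comp r) := by
    refine ⟨⟨⟨K, hK_cont⟩, hq.surjective.forall.2 fun x => ?_, hq.surjective.forall.2 fun x => ?_⟩⟩
    · exact (hK 0 x).trans (congrArg q (H.apply_zero x))
    · exact (hK 1 x).trans (congrArg q ((H.apply_one x).trans (DFunLike.congr_fun hr x).symm))
  exact ⟨⟨q, r, hr ▸ ⟨H.symm⟩, K_homotopy.symm⟩⟩

theorem exists_isQuotientMap_of_range_eq [CompactSpace X] [CompactSpace Y] [T2Space E]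
    (φ : C(X, E)) (e : C(Y, E)) (he : Function.Injective e)
    (hrange : Set.range φ = Set.range e) :
    ∃ q : C(X, Y), IsQuotientMap q ∧ ∀ x, e (q x) = φ x := by
  have hemb : IsClosedEmbedding e := e.continuous.isClosedEmbedding he
  have : T2Space Y := .of_injective_continuous he e.continuous
  choose q hq using fun x => hrange.subset (Set.mem_range_self x)
  have hq_cont : Continuous q := by
    rw [hemb.isInducing.continuous_iff, show e ∘ q = φ from funext hq]
    exact φ.continuous
  have hq_surj : Function.Surjective q := fun y => by
    obtain ⟨x, hx⟩ := hrange.superset (Set.mem_range_self y)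
    exact ⟨x, he ((hq x).trans hx)⟩
  exact ⟨⟨q, hq_cont⟩, .of_surjective_continuous hq_surj hq_cont, hq⟩

end QuotientMap

section Susp

variable {X E : Type*} [TopologicalSpace X]

instance [CompactSpace X] : CompactSpace (Susp X) :=
  Quot.compactSpace

/-- The map on the suspension of `X` induced by a map on the cylinder `X × I` that is constant on
both ends; `a` and `b` are the images of the south and the north pole. -/
def Susp.lift (f : X × I → E) (a b : E) (hf₀ : ∀ x, f (x, 0) = a) (hf₁ : ∀ x, f (x, 1) = b) :
    Susp X → E :=
  Quot.lift (Sum.elim f fun c => cond c b a) <| by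
    rintro _ _ (⟨x, rfl, rfl⟩ | ⟨x, rfl, rfl⟩)
    · exact hf₀ x
    · exact hf₁ x

variable {f : X × I → E} {a b : E} {hf₀ : ∀ x, f (x, 0) = a} {hf₁ : ∀ x, f (x, 1) = b}

theorem Susp.continuous_lift [TopologicalSpace E] (hf : Continuous f) :
    Continuous (Susp.lift f a b hf₀ hf₁) :=
  continuous_quot_lift _ (hf.sumElim continuous_of_discreteTopology)

theorem Susp.range_lift :
    Set.range (Susp.lift f a b hf₀ hf₁) = insert b (insert a (Set.range f)) := by
  refine (Set.range_quot_lift _).trans ?_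
  rw [Set.Sum.elim_range, Bool.range_eq, Set.union_comm, Set.pair_comm, Set.insert_union,
    Set.singleton_union, cond_true, cond_false]

theorem Susp.eq_pole_or_exists_mk (y : Susp X) :
    y = Quot.mk _ (.inr false) ∨ y = Quot.mk _ (.inr true) ∨
      ∃ x, ∃ t : I, t ≠ 0 ∧ t ≠ 1 ∧ y = Quot.mk _ (.inl (x, t)) := by
  obtain ⟨⟨x, t⟩ | ⟨_ | _⟩⟩ := y
  · obtain rfl | h₀ := eq_or_ne t 0
    · exact .inl (Quot.sound (.inl ⟨x, rfl, rfl⟩))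
    obtain rfl | h₁ := eq_or_ne t 1
    · exact .inr (.inl (Quot.sound (.inr ⟨x, rfl, rfl⟩)))
    exact .inr (.inr ⟨x, t, h₀, h₁, rfl⟩)
  · exact .inl rfl
  · exact .inr (.inl rfl)

theorem Susp.lift_injective (height : E → I) (height_f : ∀ x t, height (f (x, t)) = t)
    (height_a : height a = 0) (height_b : height b = 1)
    (hf : ∀ t : I, t ≠ 0 → t ≠ 1 → Function.Injective fun x => f (x, t)) :
    Function.Injective (Susp.lift f a b hf₀ hf₁) := by
  intro y z h
  have h_height := congrArg height h
  obtain rfl | rfl | ⟨x, t, ht₀, ht₁, rfl⟩ := y.eq_pole_or_exists_mk <;>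
  obtain rfl | rfl | ⟨x', t', ht₀', ht₁', rfl⟩ := z.eq_pole_or_exists_mk <;>
  simp only [Susp.lift, Sum.elim_inl, Sum.elim_inr, cond_false, cond_true, height_f, height_a,
    height_b] at h h_height
  case inr.inr.inr.inr =>
    obtain rfl := h_height
    rw [hf t ht₀ ht₁ h]
  all_goals first | rfl | simp_all

end Susp

section Wedge

variable {ι E : Type*} {X : ι → Type*} [∀ i, TopologicalSpace (X i)] {pt : ∀ i, X i}

instance [Finite ι] [∀ i, CompactSpace (X i)] : CompactSpace (Wedge X pt) :=
  Quot.compactSpace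

/-- The map on the wedge sum induced by maps on the summands that send every base point to `e`. -/
def Wedge.lift (c : ∀ i, X i → E) (e : E) (hc : ∀ i, c i (pt i) = e) : Wedge X pt → E :=
  Quot.lift (Sum.elim (fun p => c p.1 p.2) fun _ => e) <| by
    rintro _ _ ⟨i, rfl, rfl⟩
    exact hc i

variable {c : ∀ i, X i → E} {e : E} {hc : ∀ i, c i (pt i) = e}

theorem Wedge.continuous_lift [TopologicalSpace E] (hcont : ∀ i, Continuous (c i)) :
    Continuous (Wedge.lift c e hc) :=
  continuous_quot_lift _ ((continuous_sigma hcont).sumElim continuous_const)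

theorem Wedge.range_lift :
    Set.range (Wedge.lift c e hc) = insert e (⋃ i, Set.range (c i)) := by
  refine (Set.range_quot_lift _).trans ?_
  rw [Set.Sum.elim_range, Set.range_const, Set.union_singleton,
    Set.range_sigma_eq_iUnion_range]

theorem Wedge.lift_injective (hinj : ∀ i, Function.Injective (c i))
    (hne : ∀ i j, i ≠ j → ∀ x y, c i x = c j y → c i x = e) :
    Function.Injective (Wedge.lift c e hc) := by
  have base : ∀ i x, c i x = e → (Quot.mk _ (.inl ⟨i, x⟩) : Wedge X pt) = Quot.mk _ (.inr ()) := by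
    intro i x hx
    obtain rfl := hinj i (hx.trans (hc i).symm)
    exact Quot.sound ⟨i, rfl, rfl⟩
  rintro ⟨⟨i, x⟩ | ⟨⟩⟩ ⟨⟨j, y⟩ | ⟨⟩⟩ (h : _ = _)
  · change c i x = c j y at h
    obtain rfl | hij := eq_or_ne i j
    · rw [hinj i h]
    · have hx := hne i j hij x y h
      rw [base i x hx, base j y (h.symm.trans hx)]
  · exact base i x h
  · exact (base j y h.symm).symm
  · rfl

end Wedge

section Realization

variable {V : Type*} [Fintype V] {K : Set (Finset V)} {f : V → ℝ}

/-- The geometric realization of `K` as a subset of the standard simplex. Supports are only required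
to be contained in a face; for a complex this gives the same set, and makes its closedness
evident. -/
def realizationSet (K : Set (Finset V)) : Set (V → ℝ) :=
  {f ∈ stdSimplex ℝ V | ∃ s ∈ K, Function.support f ⊆ s}

theorem mem_realizationSet_iff (hK : IsLowerSet K) :
    f ∈ realizationSet K ↔
      (∀ v, 0 ≤ f v) ∧ ∑ᶠ v, f v = 1 ∧ ∃ s ∈ K, {v | f v ≠ 0} = (s : Set V) := by
  rw [finsum_eq_sum_of_fintype]
  constructor
  · rintro ⟨⟨hf_nonneg, hf_sum⟩, s, hs, hfs⟩
    lift Function.support f to Finset V using Set.toFinite _ with t ht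
    exact ⟨hf_nonneg, hf_sum, t, hK (Finset.coe_subset.1 hfs) hs, ht.symm⟩
  · rintro ⟨hf_nonneg, hf_sum, s, hs, hfs⟩
    exact ⟨⟨hf_nonneg, hf_sum⟩, s, hs, hfs.subset⟩

theorem range_coe_realization (hK : IsLowerSet K) :
    Set.range (fun x : realization K => x.1) = realizationSet K :=
  Subtype.range_coe.trans <| Set.ext fun _ => (mem_realizationSet_iff hK).symm

theorem isCompact_realizationSet (K : Set (Finset V)) : IsCompact (realizationSet K) := by
  have h_union : realizationSet K = ⋃ s ∈ K, stdSimplex ℝ V ∩ {f | ∀ v ∉ s, f v = 0} := by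
    ext f
    simp only [realizationSet, Function.support_subset_iff', Set.mem_ofPred_eq, Set.mem_iUnion,
      Set.mem_inter_iff, exists_prop, exists_and_left.symm, and_left_comm, Finset.mem_coe]
  rw [h_union]
  refine K.toFinite.isCompact_biUnion fun s _ => (isCompact_stdSimplex ℝ V).inter_right ?_
  simp only [Set.ofPred_forall]
  exact isClosed_iInter fun v => isClosed_iInter fun _ =>
    isClosed_eq (continuous_apply v) continuous_const

theorem single_mem_realizationSet [DecidableEq V] {v : V} (hv : {v} ∈ K) :
    Pi.single v 1 ∈ realizationSet K :=
  ⟨single_mem_stdSimplex ℝ v, {v}, hv, by simp⟩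

end Realization

theorem compactSpace_realization {V : Type*} [Finite V] {K : Set (Finset V)}
    (hK : IsLowerSet K) : CompactSpace (realization K) := by
  have := Fintype.ofFinite V
  have := isCompact_realizationSet K
  rw [show realizationSet K = {f | _} from Set.ext fun f => mem_realizationSet_iff hK] at this
  exact isCompact_iff_compactSpace.1 this

section MassOn

variable {V : Type*}

theorem continuous_indicator_apply (F : Set V) : Continuous fun f : V → ℝ => F.indicator f := by
  refine continuous_pi fun v => ?_
  by_cases hv : v ∈ F
  · simpa [hv] using continuous_apply v
  · simpa [hv] using continuous_const

variable [Fintype V] {F : Set V} {f g : V → ℝ}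

/-- The total weight that barycentric coordinates `f` put on the vertices of `F`. -/
noncomputable def massOn (F : Set V) (f : V → ℝ) : ℝ :=
  ∑ v, F.indicator f v

theorem continuous_massOn (F : Set V) : Continuous (massOn F) :=
  continuous_finsetSum _ fun v _ => (continuous_apply v).comp (continuous_indicator_apply F)

theorem massOn_add_massOn_compl (F : Set V) (f : V → ℝ) : massOn F f + massOn Fᶜ f = ∑ v, f v := by
  simp_rw [massOn, ← Finset.sum_add_distrib, Set.indicator_self_add_compl_apply]

theorem massOn_nonneg (hf : ∀ v, 0 ≤ f v) : 0 ≤ massOn F f :=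
  Finset.sum_nonneg fun v _ => Set.indicator_nonneg (fun v _ => hf v) v

theorem massOn_eq_zero_iff (hf : ∀ v, 0 ≤ f v) : massOn F f = 0 ↔ ∀ v ∈ F, f v = 0 := by
  rw [massOn, Finset.sum_eq_zero_iff_of_nonneg fun v _ => Set.indicator_nonneg (fun v _ => hf v) v]
  simp [Set.indicator_apply_eq_zero]

theorem massOn_eq_apply (hf : (Function.support f ∩ F).Subsingleton) {v : V} (hv : v ∈ F)
    (hfv : f v ≠ 0) : massOn F f = f v := by
  rw [massOn, Fintype.sum_eq_single v fun w hw => ?_, Set.indicator_of_mem hv]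
  exact Set.indicator_apply_eq_zero.2 fun hwF =>
    of_not_not fun hw₀ => hw (hf ⟨hw₀, hwF⟩ ⟨hfv, hv⟩)

theorem massOn_comp (hf : (Function.support f ∩ F).Subsingleton) {T : ℝ → ℝ} (hT : T 0 = 0) :
    massOn F (T ∘ f) = T (massOn F f) := by
  rw [Set.inter_comm, ← Set.support_indicator] at hf
  rw [massOn, massOn, Set.indicator_comp_of_zero hT]
  obtain h_empty | ⟨v, hv⟩ := (Function.support (F.indicator f)).eq_empty_or_nonempty
  · simp [Function.support_eq_empty_iff.1 h_empty, hT]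
  · have h_zero : ∀ w ≠ v, F.indicator f w = 0 := fun w hw => of_not_not fun hw₀ => hw (hf hw₀ hv)
    rw [Fintype.sum_eq_single v h_zero,
      Fintype.sum_eq_single v fun w hw => by rw [Function.comp_apply, h_zero w hw, hT]]
    rfl

/-- The map that collapses the coordinates vanishing on `F`, and nothing else, to a point. -/
noncomputable def collapse (F : Set V) (f : V → ℝ) : V → ℝ :=
  massOn F f • f

theorem continuous_collapse (F : Set V) : Continuous (collapse F) :=
  (continuous_massOn F).smul continuous_id

theorem collapse_eq_collapse_iff (hf : f ∈ stdSimplex ℝ V) (hg : g ∈ stdSimplex ℝ V) :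
    collapse F f = collapse F g ↔ f = g ∨ massOn F f = 0 ∧ massOn F g = 0 := by
  constructor
  · intro h
    have h_mass : massOn F f = massOn F g := by
      have h_sum : ∀ {e}, e ∈ stdSimplex ℝ V → ∑ v, collapse F e v = massOn F e := fun he => by
        simp [collapse, ← Finset.mul_sum, he.2]
      rw [← h_sum hf, ← h_sum hg, h]
    rw [collapse, collapse, h_mass] at h
    obtain h₀ | h₀ := eq_or_ne (massOn F g) 0
    · exact .inr ⟨h_mass.trans h₀, h₀⟩
    · exact .inl (smul_right_injective _ h₀ h)
  · rintro (rfl | ⟨hf₀, hg₀⟩)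
    · rfl
    · rw [collapse, collapse, hf₀, hg₀, zero_smul, zero_smul]

end MassOn

section Deformation

variable {V : Type*} [DecidableEq V] {K : Set (Finset V)} {u : V} {F : Set V}

/-- The faces of the simplicial complex `K` missing `F` form a cone with apex `u`, and the open
stars of the vertices in `F`, which cover all other faces, are pairwise disjoint. -/
structure IsConeUnionStars (K : Set (Finset V)) (u : V) (F : Set V) : Prop where
  isLowerSet : IsLowerSet K
  empty_mem : ∅ ∈ K
  apex_notMem : u ∉ F
  insert_apex_mem : ∀ s ∈ K, Disjoint (s : Set V) F → insert u s ∈ K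
  singleton_mem : ∀ v ∈ F, {v} ∈ K
  subsingleton_inter : ∀ s ∈ K, ((s : Set V) ∩ F).Subsingleton

theorem IsConeUnionStars.singleton_apex_mem (h : IsConeUnionStars K u F) : {u} ∈ K :=
  h.insert_apex_mem ∅ h.empty_mem (by simp)

variable [Fintype V] {f : V → ℝ} {s : ℝ}

theorem IsConeUnionStars.subsingleton_support_inter (h : IsConeUnionStars K u F)
    (hf : f ∈ realizationSet K) : (Function.support f ∩ F).Subsingleton := by
  obtain ⟨-, t, ht, hft⟩ := hf
  exact (h.subsingleton_inter t ht).anti (Set.inter_subset_inter_left F hft)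

/-- The affine function of `m` that maps the interval `[s / (1 + s), 1]` onto `[0, 1]`. -/
def stretch (s m : ℝ) : ℝ :=
  (1 + s) * m - s

/-- A deformation, with time `s`, of barycentric coordinates that stretches the weight on `F` and
moves the coordinates whose stretched weight would be negative towards the vertex `u`. The
coefficients keep the total weight equal to `1`. -/
noncomputable def coneDeform (u : V) (F : Set V) (s : ℝ) (f : V → ℝ) : V → ℝ :=
  F.indicator (fun v => (stretch s (f v))⁺) +
    (1 + s - 2 * (stretch s (massOn F f))⁻) • Fᶜ.indicator f +
    ((stretch s (massOn F f))⁻ * (1 - 2 * massOn F f)) • Pi.single u 1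

theorem coneDeform_apply_of_mem (hu : u ∉ F) {v : V} (hv : v ∈ F) :
    coneDeform u F s f v = (stretch s (f v))⁺ := by
  simp [coneDeform, hv, ne_of_mem_of_not_mem hv hu]

theorem coneDeform_zero (hf : ∀ v, 0 ≤ f v) : coneDeform u F 0 f = f := by
  simp [coneDeform, stretch, massOn_nonneg hf, hf]

theorem coneDeform_one_of_massOn_eq_zero (hf : ∀ v, 0 ≤ f v) (hfF : massOn F f = 0) :
    coneDeform u F 1 f = Pi.single u 1 := by
  have h_indicator : F.indicator (fun v => (stretch 1 (f v))⁺) = 0 :=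
    Set.indicator_eq_zero'.2 <| Set.disjoint_left.2 fun v hv hvF => hv <| by
      simp [(massOn_eq_zero_iff hf).1 hfF v hvF, stretch]
  rw [coneDeform, h_indicator, hfF]
  norm_num [stretch]

theorem massOn_coneDeform_eq_zero (hu : u ∉ F) (hs : 0 ≤ s) (hf : ∀ v, 0 ≤ f v)
    (hfF : massOn F f = 0) : massOn F (coneDeform u F s f) = 0 :=
  Finset.sum_eq_zero fun v _ => Set.indicator_apply_eq_zero.2 fun hv => by
    simp [coneDeform_apply_of_mem hu hv, (massOn_eq_zero_iff hf).1 hfF v hv, stretch, hs]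

theorem sum_coneDeform (hs : 0 ≤ s) (hf : f ∈ stdSimplex ℝ V)
    (hfF : (Function.support f ∩ F).Subsingleton) : ∑ v, coneDeform u F s f v = 1 := by
  have h_compl : massOn Fᶜ f = 1 - massOn F f := by
    rw [← hf.2, ← massOn_add_massOn_compl F f, add_sub_cancel_left]
  have h_stretch : massOn F (fun v => (stretch s (f v))⁺) = (stretch s (massOn F f))⁺ :=
    massOn_comp hfF (T := fun m => (stretch s m)⁺) (by simp [stretch, hs])
  have h_parts := posPart_sub_negPart (stretch s (massOn F f))
  calc ∑ v, coneDeform u F s f v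
      = (stretch s (massOn F f))⁺ +
          (1 + s - 2 * (stretch s (massOn F f))⁻) * (1 - massOn F f) +
          (stretch s (massOn F f))⁻ * (1 - 2 * massOn F f) := by
        rw [← h_stretch, ← h_compl]
        simp [coneDeform, Finset.sum_add_distrib, ← Finset.mul_sum, ← massOn.eq_1]
    _ = 1 := by
        rw [stretch] at h_parts ⊢
        linear_combination h_parts

theorem coneDeform_nonneg (hs : s ∈ Set.Icc 0 1) (hf : f ∈ stdSimplex ℝ V) (v : V) :
    0 ≤ coneDeform u F s f v := by
  have hm₀ : 0 ≤ massOn F f := massOn_nonneg hf.1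
  have h_neg_le : (stretch s (massOn F f))⁻ ≤ s := by
    refine sup_le ?_ hs.1
    rw [stretch]
    nlinarith [hs.1]
  have h_coeff : 0 ≤ 1 + s - 2 * (stretch s (massOn F f))⁻ := by linarith [hs.2]
  have h_apex : 0 ≤ (stretch s (massOn F f))⁻ * (1 - 2 * massOn F f) := by
    obtain h | h := le_total 0 (stretch s (massOn F f))
    · simp [h]
    · refine mul_nonneg (negPart_nonneg _) ?_
      rw [stretch] at h
      nlinarith [hs.1, hs.2]
  refine add_nonneg (add_nonneg ?_ (mul_nonneg h_coeff ?_)) (mul_nonneg h_apex ?_)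
  · exact Set.indicator_nonneg (fun v _ => posPart_nonneg _) v
  · exact Set.indicator_nonneg (fun v _ => hf.1 v) v
  · exact (single_mem_stdSimplex ℝ u).1 v

theorem IsConeUnionStars.coneDeform_mem_realizationSet (h : IsConeUnionStars K u F)
    (hs : s ∈ Set.Icc 0 1) (hf : f ∈ realizationSet K) :
    coneDeform u F s f ∈ realizationSet K := by
  have hfF := h.subsingleton_support_inter hf
  obtain ⟨hf_simplex, t, ht, hft⟩ := hf
  refine ⟨⟨coneDeform_nonneg hs hf_simplex, sum_coneDeform hs.1 hf_simplex hfF⟩, ?_⟩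
  have h_mem : ∀ v ∈ F, coneDeform u F s f v ≠ 0 → f v ≠ 0 ∧ 0 < stretch s (massOn F f) := by
    intro v hv hfv'
    rw [coneDeform_apply_of_mem h.apex_notMem hv, ne_eq, posPart_eq_zero, not_le] at hfv'
    have hfv : f v ≠ 0 := fun hfv => by
      rw [hfv, stretch] at hfv'
      linarith [hs.1]
    exact ⟨hfv, massOn_eq_apply hfF hv hfv ▸ hfv'⟩
  obtain hm | hm := le_or_gt (stretch s (massOn F f)) 0
  · classical
    refine ⟨insert u (t.filter (· ∉ F)), ?_, fun v hfv' => ?_⟩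
    · refine h.insert_apex_mem _ (h.isLowerSet (t.filter_subset _) ht) ?_
      exact Set.disjoint_left.2 fun v hv => (Finset.mem_filter.1 hv).2
    · have hv : v ∉ F := fun hv => (h_mem v hv hfv').2.not_ge hm
      rw [Finset.coe_insert, Finset.coe_filter, Set.mem_insert_iff, or_iff_not_imp_left]
      refine fun hvu => ⟨hft fun hfv => hfv' ?_, hv⟩
      simp [coneDeform, hfv, hv, hvu]
  · refine ⟨t, ht, fun v hfv' => hft fun hfv => ?_⟩
    by_cases hv : v ∈ F
    · exact (h_mem v hv hfv').1 hfv
    · exact hfv' (by simp [coneDeform, hfv, hv, hm.le])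

theorem continuous_coneDeform (u : V) (F : Set V) :
    Continuous fun p : ℝ × (V → ℝ) => coneDeform u F p.1 p.2 := by
  have h_stretch : Continuous fun p : ℝ × ℝ => stretch p.1 p.2 := by
    unfold stretch
    fun_prop
  have h_mass : Continuous fun p : ℝ × (V → ℝ) => massOn F p.2 :=
    (continuous_massOn F).comp continuous_snd
  have h_negPart : Continuous fun p : ℝ × (V → ℝ) => (stretch p.1 (massOn F p.2))⁻ :=
    continuous_negPart.comp (h_stretch.comp (continuous_fst.prodMk h_mass))
  have h_posPart : Continuous fun p : ℝ × (V → ℝ) => fun v => (stretch p.1 (p.2 v))⁺ :=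
    continuous_pi fun v => continuous_posPart.comp <|
      h_stretch.comp (continuous_fst.prodMk ((continuous_apply v).comp continuous_snd))
  have h_compl : Continuous fun p : ℝ × (V → ℝ) => Fᶜ.indicator p.2 :=
    (continuous_indicator_apply Fᶜ).comp continuous_snd
  have h_indicator : Continuous fun p : ℝ × (V → ℝ) =>
      F.indicator fun v => (stretch p.1 (p.2 v))⁺ :=
    (continuous_indicator_apply F).comp h_posPart
  have h_coeff : Continuous fun p : ℝ × (V → ℝ) =>
      1 + p.1 - 2 * (stretch p.1 (massOn F p.2))⁻ :=
    (continuous_const.add continuous_fst).sub (continuous_const.mul h_negPart)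
  have h_apex : Continuous fun p : ℝ × (V → ℝ) =>
      (stretch p.1 (massOn F p.2))⁻ * (1 - 2 * massOn F p.2) :=
    h_negPart.mul (continuous_const.sub (continuous_const.mul h_mass))
  exact (h_indicator.add (h_coeff.smul h_compl)).add (h_apex.smul continuous_const)

theorem IsConeUnionStars.exists_homotopy_coneDeform (h : IsConeUnionStars K u F) :
    ∃ (g : C(realization K, realization K)) (H : (ContinuousMap.id _).Homotopy g),
      ∀ s x, (H (s, x)).1 = coneDeform u F s x.1 := by
  have hK := h.isLowerSet
  let H : C(I × realization K, realization K) :=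
    { toFun p := ⟨coneDeform u F p.1 p.2.1, (mem_realizationSet_iff hK).1 <|
        h.coneDeform_mem_realizationSet p.1.2 ((mem_realizationSet_iff hK).2 p.2.2)⟩
      continuous_toFun := ((continuous_coneDeform u F).comp <|
        (continuous_subtype_val.comp continuous_fst).prodMk
          (continuous_subtype_val.comp continuous_snd)).subtype_mk _ }
  exact ⟨H.curry 1, ⟨H, fun x => Subtype.ext (coneDeform_zero x.2.1), fun _ => rfl⟩, fun _ _ => rfl⟩

theorem IsConeUnionStars.nonempty_homotopyEquiv {Y : Type*} [TopologicalSpace Y]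
    (h : IsConeUnionStars K u F) {q : C(realization K, Y)} (hq : IsQuotientMap q)
    (hq_iff : ∀ x y, q x = q y ↔ collapse F x.1 = collapse F y.1) :
    Nonempty (ContinuousMap.HomotopyEquiv (realization K) Y) := by
  obtain ⟨g, H, hH⟩ := h.exists_homotopy_coneDeform
  have hK : ∀ x : realization K, x.1 ∈ realizationSet K := fun x =>
    (mem_realizationSet_iff h.isLowerSet).2 x.2
  simp only [collapse_eq_collapse_iff (hK _).1 (hK _).1] at hq_iff
  refine nonempty_homotopyEquiv_of_isQuotientMap hq H (fun x y hxy => Subtype.ext ?_)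
    fun s x y hxy => (hq_iff _ _).2 ?_
  · rw [← H.apply_one, ← H.apply_one, hH, hH]
    obtain h_eq | ⟨hx, hy⟩ := (hq_iff x y).1 hxy
    · rw [h_eq]
    · exact (coneDeform_one_of_massOn_eq_zero x.2.1 hx).trans
        (coneDeform_one_of_massOn_eq_zero y.2.1 hy).symm
  · rw [hH, hH]
    obtain h_eq | ⟨hx, hy⟩ := (hq_iff x y).1 hxy
    · exact .inl (by rw [h_eq])
    · exact .inr ⟨massOn_coneDeform_eq_zero h.apex_notMem s.2.1 x.2.1 hx,
        massOn_coneDeform_eq_zero h.apex_notMem s.2.1 y.2.1 hy⟩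

end Deformation

section Link

variable {V : Type*} {K : Set (Finset V)} {v : V}

/-- The link of the vertex `v` in the complex `K`. -/
def link [DecidableEq V] (K : Set (Finset V)) (v : V) : Set (Finset V) :=
  {s | v ∉ s ∧ insert v s ∈ K}

theorem isLowerSet_link [DecidableEq V] (hK : IsLowerSet K) (v : V) : IsLowerSet (link K v) :=
  fun _ _ hst hs => ⟨fun hv => hs.1 (hst hv), hK (Finset.insert_subset_insert v hst) hs.2⟩

theorem isLowerSet_of_image_map {W : Type*} {ι : W ↪ V} {L : Set (Finset W)}
    (h : IsLowerSet (Finset.map ι '' L)) : IsLowerSet L := fun _ _ hst hs =>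
  (Finset.map_injective ι).mem_set_image.1 <|
    h (Finset.map_subset_map.2 hst) (Set.mem_image_of_mem _ hs)

variable [Fintype V]

theorem image_extend_realizationSet {W : Type*} [Fintype W] (ι : W ↪ V) (L : Set (Finset W)) :
    (fun x : W → ℝ => Function.extend ι x (0 : V → ℝ)) '' realizationSet L =
      realizationSet (Finset.map ι '' L) := by
  ext f
  constructor
  · rintro ⟨x, ⟨⟨hx_nonneg, hx_sum⟩, t, ht, hxt⟩, rfl⟩
    dsimp only
    have h_nonneg : 0 ≤ Function.extend ι x (0 : V → ℝ) := Function.extend_nonneg hx_nonneg le_rfl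
    have h_zero : ∀ v ∉ Set.range ι, Function.extend ι x (0 : V → ℝ) v = 0 := fun v hv =>
      Function.extend_apply' _ _ v hv
    refine ⟨⟨h_nonneg, ?_⟩, t.map ι, ⟨t, ht, rfl⟩, fun v hv => ?_⟩
    · rw [← hx_sum, Fintype.sum_of_injective ι ι.injective x _ h_zero fun w =>
        (ι.injective.extend_apply x _ w).symm]
    · obtain ⟨w, rfl⟩ := of_not_not fun hv' => hv (h_zero v hv')
      rw [Function.mem_support, ι.injective.extend_apply] at hv
      exact Finset.mem_map_of_mem ι (hxt hv)
  · rintro ⟨⟨hf_nonneg, hf_sum⟩, _, ⟨t, ht, rfl⟩, hft⟩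
    have h_zero : ∀ v ∉ Set.range ι, f v = 0 := fun v hv => of_not_not fun hfv => by
      obtain ⟨w, -, rfl⟩ := Finset.mem_map.1 (hft hfv)
      exact hv ⟨w, rfl⟩
    refine ⟨f ∘ ι, ⟨⟨fun w => hf_nonneg (ι w), ?_⟩, t, ht, fun w hw => ?_⟩, funext fun v => ?_⟩
    · exact (Fintype.sum_of_injective ι ι.injective _ f h_zero fun _ => rfl).trans hf_sum
    · exact (Finset.mem_map' ι).1 (hft hw)
    · by_cases hv : v ∈ Set.range ι
      · obtain ⟨w, rfl⟩ := hv
        exact ι.injective.extend_apply _ _ w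
      · exact (Function.extend_apply' _ _ v hv).trans (h_zero v hv).symm

variable [DecidableEq V] {f : V → ℝ}

theorem apply_eq_zero_of_mem_realizationSet_link (hf : f ∈ realizationSet (link K v)) :
    f v = 0 := by
  obtain ⟨-, s, hs, hfs⟩ := hf
  exact of_not_not fun hfv => hs.1 (hfs hfv)

theorem lineMap_mem_realizationSet (hf : f ∈ realizationSet (link K v)) {t : ℝ}
    (ht : t ∈ Set.Icc 0 1) : AffineMap.lineMap (Pi.single v 1) f t ∈ realizationSet K := by
  obtain ⟨hf_simplex, s, hs, hfs⟩ := hf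
  refine ⟨(convex_stdSimplex ℝ V).lineMap_mem (single_mem_stdSimplex ℝ v) hf_simplex ht,
    insert v s, hs.2, fun w hw => ?_⟩
  rw [Finset.coe_insert, Set.mem_insert_iff, or_iff_not_imp_left]
  refine fun hwv => hfs fun hfw => hw ?_
  simp [AffineMap.lineMap_apply_module, hwv, hfw]

theorem eq_single_of_mem_stdSimplex (hf : f ∈ stdSimplex ℝ V) (hfv : f v = 1) :
    f = Pi.single v 1 := by
  have h_zero : ∀ w ∈ Finset.univ.erase v, f w = 0 := by
    rw [← Finset.sum_eq_zero_iff_of_nonneg fun w _ => hf.1 w]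
    have := Finset.add_sum_erase _ f (Finset.mem_univ v)
    linarith [hf.2]
  funext w
  obtain rfl | hw := eq_or_ne w v
  · rw [hfv, Pi.single_eq_same]
  · rw [h_zero w (by simp [hw]), Pi.single_eq_of_ne hw]

theorem exists_lineMap_eq (hf : f ∈ realizationSet K) (hfv₀ : f v ≠ 0)
    (hfv₁ : f v ≠ 1) :
    ∃ g ∈ realizationSet (link K v), AffineMap.lineMap (Pi.single v 1) g (1 - f v) = f := by
  obtain ⟨hf_simplex, s, hs, hfs⟩ := hf
  have h_pos : 0 < 1 - f v :=
    sub_pos.2 (lt_of_le_of_ne (mem_Icc_of_mem_stdSimplex hf_simplex v).2 hfv₁)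
  refine ⟨(1 - f v)⁻¹ • (f - f v • Pi.single v 1), ⟨⟨fun w => ?_, ?_⟩, s.erase v,
    ⟨s.notMem_erase v, ?_⟩, fun w hw => ?_⟩, ?_⟩
  · refine mul_nonneg (inv_nonneg.2 h_pos.le) ?_
    obtain rfl | hw := eq_or_ne w v
    · simp
    · simpa [hw] using hf_simplex.1 w
  · simp [← Finset.mul_sum, hf_simplex.2, h_pos.ne']
  · rwa [Finset.insert_erase (hfs hfv₀)]
  · have hwv : w ≠ v := by
      rintro rfl
      simp at hw
    rw [Finset.coe_erase]
    refine ⟨hfs fun hfw => hw ?_, hwv⟩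
    simp [hfw, hwv]
  · rw [AffineMap.lineMap_apply_module, smul_inv_smul₀ h_pos.ne', sub_sub_cancel,
      add_sub_cancel]

/-- The open star of the vertex `v` after collapsing its complement to the point `0`, which is
included. The factor `f v` is the one by which `collapse F` multiplies `f` when `v` is the only
vertex of `F` in the support of `f`. -/
def collapsedStar (K : Set (Finset V)) (v : V) : Set (V → ℝ) :=
  insert 0 ((fun f => f v • f) '' realizationSet K)

end Link

section SuspCoord

variable {V W : Type*} {K : Set (Finset V)} {L : Set (Finset W)} {ι : W ↪ V} {v : V}

theorem continuous_extend_zero (ι : W ↪ V) :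
    Continuous fun x : W → ℝ => Function.extend ι x (0 : V → ℝ) := by
  refine continuous_pi fun v => ?_
  by_cases hv : v ∈ Set.range ι
  · obtain ⟨w, rfl⟩ := hv
    simpa only [ι.injective.extend_apply] using continuous_apply w
  · simpa only [Function.extend_apply' _ _ v hv] using continuous_const

variable [DecidableEq V]

/-- When `ι` identifies `L` with the link of `v`, the map from the suspension of `L` to `V → ℝ`
whose image is the collapsed star of `v`: the south pole goes to the vertex `v`, and the north pole,
to which the link is collapsed, to `0`. -/
noncomputable def suspCoord (ι : W ↪ V) (L : Set (Finset W)) (v : V) :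
    Susp (realization L) → V → ℝ :=
  Susp.lift (fun p => (1 - p.2 : ℝ) •
    AffineMap.lineMap (Pi.single v 1) (Function.extend ι p.1.1 0) (p.2 : ℝ)) (Pi.single v 1) 0
    (by simp) (by simp)

theorem continuous_suspCoord : Continuous (suspCoord ι L v) := by
  refine Susp.continuous_lift ?_
  have h_extend : Continuous fun p : realization L × I => Function.extend ι p.1.1 (0 : V → ℝ) :=
    (continuous_extend_zero ι).comp (continuous_subtype_val.comp continuous_fst)
  simp only [AffineMap.lineMap_apply_module]
  fun_prop

theorem suspCoord_north : suspCoord ι L v (Susp.north _) = 0 :=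
  rfl

theorem range_extend_realization [Fintype V] (hK : IsLowerSet K)
    (hL : Finset.map ι '' L = link K v) :
    Set.range (fun x : realization L => Function.extend ι x.1 (0 : V → ℝ)) =
      realizationSet (link K v) := by
  have := Fintype.ofInjective ι ι.injective
  have hL_lower : IsLowerSet L := isLowerSet_of_image_map (hL ▸ isLowerSet_link hK v)
  rw [← hL, ← image_extend_realizationSet, ← range_coe_realization hL_lower, ← Set.range_comp]
  rfl

theorem suspCoord_injective [Finite V] (hK : IsLowerSet K) (hL : Finset.map ι '' L = link K v) :
    Function.Injective (suspCoord ι L v) := by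
  have := Fintype.ofFinite V
  refine Susp.lift_injective (fun g => Set.projIcc 0 1 zero_le_one (1 - ∑ w, g w))
    (fun x t => ?_) (by simp) (by simp) fun t ht₀ ht₁ x y hxy => ?_
  · have h_mem := lineMap_mem_realizationSet
      ((range_extend_realization hK hL).subset (Set.mem_range_self x)) t.2
    simp [← Finset.mul_sum, h_mem.1.2]
  · have ht₀' : (t : ℝ) ≠ 0 := Subtype.coe_ne_coe.2 ht₀
    have ht₁' : (1 - t : ℝ) ≠ 0 := sub_ne_zero.2 (Subtype.coe_ne_coe.2 ht₁.symm)
    have h_lineMap := smul_right_injective (V → ℝ) ht₁' hxy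
    simp only [AffineMap.lineMap_apply_module, add_right_inj] at h_lineMap
    exact Subtype.ext <| Function.extend_injective ι.injective _ <|
      smul_right_injective (V → ℝ) ht₀' h_lineMap

theorem range_suspCoord [Fintype V] (hK : IsLowerSet K) (hv : {v} ∈ K)
    (hL : Finset.map ι '' L = link K v) :
    Set.range (suspCoord ι L v) = collapsedStar K v := by
  refine Susp.range_lift.trans (Set.Subset.antisymm ?_ ?_)
  · rintro _ (rfl | rfl | ⟨⟨x, t⟩, rfl⟩)
    · exact Set.mem_insert _ _
    · exact .inr ⟨_, single_mem_realizationSet hv, by simp⟩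
    · have hx := (range_extend_realization hK hL).subset (Set.mem_range_self x)
      refine .inr ⟨_, lineMap_mem_realizationSet hx t.2, ?_⟩
      simp [AffineMap.lineMap_apply_module, apply_eq_zero_of_mem_realizationSet_link hx]
  · rintro _ (rfl | ⟨f, hf, rfl⟩)
    · exact Set.mem_insert _ _
    obtain hfv₀ | hfv₀ := eq_or_ne (f v) 0
    · exact .inl (by simp [hfv₀])
    obtain hfv₁ | hfv₁ := eq_or_ne (f v) 1
    · exact .inr (.inl (by simp [eq_single_of_mem_stdSimplex hf.1 hfv₁]))
    obtain ⟨g, hg, hgf⟩ := exists_lineMap_eq hf hfv₀ hfv₁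
    obtain ⟨x, rfl⟩ := (range_extend_realization hK hL).superset hg
    let t : I := ⟨1 - f v, Set.Icc.mem_iff_one_sub_mem.1 (mem_Icc_of_mem_stdSimplex hf.1 v)⟩
    refine .inr (.inr ⟨⟨x, t⟩, ?_⟩)
    simp [t, hgf]

end SuspCoord

section Wedge

variable {V : Type*} [DecidableEq V] {K : Set (Finset V)} {u : V} {F : Set V}

theorem IsConeUnionStars.image_collapse [Fintype V] (h : IsConeUnionStars K u F) :
    collapse F '' realizationSet K = insert 0 (⋃ v : F, collapsedStar K v) := by
  have h_apply : ∀ f ∈ realizationSet K, ∀ v ∈ F, f v ≠ 0 → collapse F f = f v • f :=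
    fun f hf v hv hfv => by
      rw [collapse, massOn_eq_apply (h.subsingleton_support_inter hf) hv hfv]
  have h_zero : ∀ f ∈ realizationSet K, (∀ v ∈ F, f v = 0) → collapse F f = 0 :=
    fun f hf hfF => by rw [collapse, (massOn_eq_zero_iff hf.1.1).2 hfF, zero_smul]
  have h_apex := single_mem_realizationSet h.singleton_apex_mem
  have h_zero_mem : 0 ∈ collapse F '' realizationSet K :=
    ⟨_, h_apex, h_zero _ h_apex fun v hv =>
      Pi.single_eq_of_ne (ne_of_mem_of_not_mem hv h.apex_notMem) 1⟩
  refine Set.Subset.antisymm ?_ (Set.insert_subset ?_ (Set.iUnion_subset fun v => ?_))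
  · rintro _ ⟨f, hf, rfl⟩
    by_cases hfF : ∀ v ∈ F, f v = 0
    · exact .inl (h_zero f hf hfF)
    · push Not at hfF
      obtain ⟨v, hv, hfv⟩ := hfF
      exact .inr (Set.mem_iUnion.2 ⟨⟨v, hv⟩, .inr ⟨f, hf, (h_apply f hf v hv hfv).symm⟩⟩)
  · exact h_zero_mem
  · rintro _ (rfl | ⟨f, hf, rfl⟩)
    · exact h_zero_mem
    obtain hfv | hfv := eq_or_ne (f v) 0
    · simpa [hfv] using h_zero_mem
    · exact ⟨f, hf, h_apply f hf v v.2 hfv⟩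

theorem IsConeUnionStars.eq_zero_of_mem_collapsedStar [Fintype V] (h : IsConeUnionStars K u F)
    {v w : V} (hv : v ∈ F) (hw : w ∈ F) (hvw : v ≠ w) {e : V → ℝ} (hev : e ∈ collapsedStar K v)
    (hew : e ∈ collapsedStar K w) : e = 0 := by
  by_contra he
  obtain ⟨f, hf, hfe⟩ := Set.mem_of_mem_insert_of_ne hev he
  obtain ⟨g, -, hge⟩ := Set.mem_of_mem_insert_of_ne hew he
  dsimp only at hfe hge
  have hfv : f v ≠ 0 := fun hfv => he (by rw [← hfe, hfv, zero_smul])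
  have hgw : g w ≠ 0 := fun hgw => he (by rw [← hge, hgw, zero_smul])
  have hfw : f w ≠ 0 := fun hfw => hgw <| by
    simpa [hfw] using congrFun (hge.trans hfe.symm) w
  exact hvw (h.subsingleton_support_inter hf ⟨hfv, hv⟩ ⟨hfw, hw⟩)

theorem indComplex_wedge_susp_of_complete_nbhd_general [Finite V] (h : IsConeUnionStars K u F)
    {W : F → Type*} (ι : ∀ v, W v ↪ V) (L : ∀ v, Set (Finset (W v)))
    (hL : ∀ v, Finset.map (ι v) '' L v = link K v) :
    Nonempty (ContinuousMap.HomotopyEquiv (realization K)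
      (Wedge (fun v : F => Susp (realization (L v))) fun _ => Susp.north _)) := by
  have := Fintype.ofFinite V
  have hK := h.isLowerSet
  have h_range := fun v : F => range_suspCoord hK (h.singleton_mem v v.2) (hL v)
  have hK_compact := compactSpace_realization hK
  have hL_compact : ∀ v, CompactSpace (realization (L v)) := fun v =>
    have := Finite.of_injective (ι v) (ι v).injective
    compactSpace_realization (isLowerSet_of_image_map (hL v ▸ isLowerSet_link hK v))
  let e := Wedge.lift (fun v : F => suspCoord (ι v) (L v) v) 0 fun _ => suspCoord_north
  have he_inj : Function.Injective e :=
    Wedge.lift_injective (fun v => suspCoord_injective hK (hL v)) fun v w hvw x y hxy =>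
      h.eq_zero_of_mem_collapsedStar v.2 w.2 (Subtype.coe_ne_coe.2 hvw)
        (h_range v ▸ Set.mem_range_self x) (h_range w ▸ hxy ▸ Set.mem_range_self y)
  have he_range : Set.range (fun x : realization K => collapse F x.1) = Set.range e := by
    rw [Wedge.range_lift, Set.iUnion_congr h_range, ← h.image_collapse, ← range_coe_realization hK,
      ← Set.range_comp]
    rfl
  obtain ⟨q, hq, heq⟩ := exists_isQuotientMap_of_range_eq
    (⟨_, (continuous_collapse F).comp continuous_subtype_val⟩ : C(realization K, V → ℝ))
    ⟨e, Wedge.continuous_lift fun _ => continuous_suspCoord⟩ he_inj he_range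
  refine h.nonempty_homotopyEquiv hq fun x y => ?_
  exact he_inj.eq_iff.symm.trans (Eq.congr (heq x) (heq y))

end Wedge

section Graph

variable {V : Type*}

theorem image_map_indepFaces_induce (G : SimpleGraph V) (A : Set V) :
    Finset.map (Function.Embedding.subtype _) '' indepFaces (G.induce A) =
      {s ∈ indepFaces G | (s : Set V) ⊆ A} := by
  classical
  refine Set.Subset.antisymm ?_ fun s ⟨hs, hsA⟩ => ?_
  · rintro _ ⟨t, ht, rfl⟩
    simpa [indepFaces] using ht
  · refine ⟨s.subtype (· ∈ A), fun a ha b hb => ?_, Finset.subtype_map_of_mem fun a ha => hsA ha⟩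
    exact hs a (Finset.mem_subtype.1 ha) b (Finset.mem_subtype.1 hb)

variable [DecidableEq V] {G : SimpleGraph V}

theorem insert_mem_indepFaces_iff {v : V} {s : Finset V} :
    insert v s ∈ indepFaces G ↔ s ∈ indepFaces G ∧ ∀ a ∈ s, ¬ G.Adj v a := by
  constructor
  · intro hs
    exact ⟨fun a ha b hb => hs a (Finset.mem_insert_of_mem ha) b (Finset.mem_insert_of_mem hb),
      fun a ha => hs v (Finset.mem_insert_self v s) a (Finset.mem_insert_of_mem ha)⟩
  · rintro ⟨hs, hv⟩
    simp_all [indepFaces, G.adj_comm]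

theorem link_indepFaces (G : SimpleGraph V) (v : V) :
    link (indepFaces G) v = {s ∈ indepFaces G | (s : Set V) ⊆ (G.closedNbhd v)ᶜ} := by
  ext s
  have h_subset : (s : Set V) ⊆ (G.closedNbhd v)ᶜ ↔ v ∉ s ∧ ∀ a ∈ s, ¬ G.Adj v a := by
    rw [Set.subset_compl_comm, SimpleGraph.closedNbhd, Set.insert_subset_iff]
    exact and_congr Iff.rfl (forall_congr' fun a => imp_not_comm)
  rw [link, Set.mem_ofPred_eq, Set.mem_ofPred_eq, insert_mem_indepFaces_iff, h_subset,
    and_left_comm]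

theorem isConeUnionStars_indepFaces {u : V} (hu : G.IsClique (G.neighborSet u)) :
    IsConeUnionStars (indepFaces G) u (G.neighborSet u) where
  isLowerSet _ _ hst hs a ha b hb := hs a (hst ha) b (hst hb)
  empty_mem := by simp [indepFaces]
  apex_notMem := G.irrefl
  insert_apex_mem _ hs h_disj :=
    insert_mem_indepFaces_iff.2 ⟨hs, fun _ ha => Set.disjoint_left.1 h_disj ha⟩
  singleton_mem _ _ := by simp [indepFaces]
  subsingleton_inter s hs a ha b hb := of_not_not fun hab =>
    hs a ha.1 b hb.1 (hu ha.2 hb.2 hab)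

end Graph

/-- If `G[N(u)]` is complete then `Ind(G)` is homotopy equivalent to the
wedge over `v ∈ N(u)` of `susp(Ind(G \ Ṅ(v)))`. -/
theorem indComplex_wedge_susp_of_complete_nbhd {V : Type*} [Fintype V]
    (G : SimpleGraph V) (u : V) (hu : G.induce (G.neighborSet u) = ⊤) :
    Nonempty (ContinuousMap.HomotopyEquiv (realization (indepFaces G))
      (Wedge (fun v : ↥(G.neighborSet u) =>
          Susp (realization (indepFaces (G.induce (G.closedNbhd v.1)ᶜ))))
        (fun v => Susp.north _))) := by
  classical
  exact indComplex_wedge_susp_of_complete_nbhd_general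
    (isConeUnionStars_indepFaces (SimpleGraph.induce_eq_top.1 hu)) _ _
    fun _ => (image_map_indepFaces_induce G _).trans (link_indepFaces G _).symm
end
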